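/- There is an absolute constant C such that the following holds. Let 0 < φ ≤ 1, and let G be a finite connected simple graph with n ≥ 2 vertices and m edges that is a φ-expander. Let A and B be disjoint sets of vertices of G with |A| ≤ |B|. Then there exist a matching M between A and B with |M| = |A| (every vertex of A is matched to a distinct vertex of B), together with a family (P_{ab})_{(a,b)∈M} of paths in G, where each P_{ab} joins a to b and has length at most C·(log₂ n)/φ, and every edge of G lies on at most C·(log₂ n)²/φ² of these paths. -/

import Mathlib

open Finset
open scoped Classical

noncomputable section

universe u

variable {V : Type*} [Fintype V]

/-- The degree of the vertex `v` in the graph `G`. -/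
def gdeg (G : SimpleGraph V) (v : V) : ℕ :=
  (Finset.univ.filter fun u => G.Adj v u).card

/-- The volume of a vertex set `S` in `G`: the sum of degrees of its vertices. -/
def gvol (G : SimpleGraph V) (S : Finset V) : ℕ := ∑ v ∈ S, gdeg G v

/-- The number of edges of `G` with exactly one endpoint in `S`. -/
def gcut (G : SimpleGraph V) (S : Finset V) : ℕ :=
  (Finset.univ.filter fun p : V × V => p.1 ∈ S ∧ p.2 ∉ S ∧ G.Adj p.1 p.2).card

/-- `G` is a `φ`-expander: for every set `S` with `∅ ≠ S ⊊ V(G)`,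
`δ_G(S) ≥ φ · min(vol_G(S), vol_G(V \ S))`. -/
def IsExpander (G : SimpleGraph V) (φ : ℝ) : Prop :=
  ∀ S : Finset V, S.Nonempty → (Finset.univ \ S).Nonempty →
    φ * min (gvol G S : ℝ) (gvol G (Finset.univ \ S) : ℝ) ≤ (gcut G S : ℝ)

/-!
Match the vertices of `A` greedily, one short path at a time, avoiding the edges that already carry
`Θ(log n / φ²)` paths. As long as at most half of `A` has been matched, double counting shows that
there are so few saturated edges that deleting them removes at most half of the boundary of every
vertex set of volume at least the number of unmatched vertices. Balls around the unmatched parts of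
`A` and of `B` therefore keep growing by a factor `1 + φ / 2` until each of them holds more than
half of the volume, so that they intersect and yield a path of length `O(log n / φ)`. Once half of
`A` is matched, all loads are reset and the process is repeated on the unmatched part; this happens
at most `O(log n)` times, whence the second logarithm in the congestion.
-/

/-! ### Greedy routing in robustly linked graphs -/

section Routing

variable {α : Type*} {G : SimpleGraph α}

/-- A pair of vertices together with a path of `G` joining them: one edge of a matching along with
its embedding into `G`. -/
abbrev RoutedPair (G : SimpleGraph α) := Σ p : α × α, G.Path p.1 p.2

/-- The first endpoints of the routed pairs in `R`. -/
def sources (R : Finset (RoutedPair G)) : Finset α := R.image fun x => x.1.1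

/-- The second endpoints of the routed pairs in `R`. -/
def targets (R : Finset (RoutedPair G)) : Finset α := R.image fun x => x.1.2

/-- The congestion of the edge `e`: the number of paths of `R` that pass through `e`. -/
def load (R : Finset (RoutedPair G)) (e : Sym2 α) : ℕ :=
  (R.filter fun x => e ∈ x.2.1.edges).card

/-- `R` is an embedded matching: its pairs form a (not necessarily perfect) matching between `A` and
`B`, and its paths have length at most `L`. -/
structure IsRouting (A B : Finset α) (L : ℕ) (R : Finset (RoutedPair G)) : Prop where
  source_mem : ∀ x ∈ R, x.1.1 ∈ A
  target_mem : ∀ x ∈ R, x.1.2 ∈ B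
  injOn_source : Set.InjOn (fun x : RoutedPair G => x.1.1) R
  injOn_target : Set.InjOn (fun x : RoutedPair G => x.1.2) R
  length_le : ∀ x ∈ R, x.2.1.length ≤ L

/-- Any two vertex sets `S` and `T` with `|S| ≤ |T|` are joined by a path of length at most `L`,
even after the deletion of up to `|S| / s` arbitrary edges. This is all that the greedy routing uses
about an expander. -/
def RobustlyLinked (G : SimpleGraph α) (s L : ℕ) : Prop :=
  ∀ (F : Finset (Sym2 α)) (S T : Finset α), S.Nonempty → F.card * s ≤ S.card → S.card ≤ T.card →
    ∃ a ∈ S, ∃ b ∈ T, ∃ p : G.Path a b, p.1.length ≤ L ∧ ∀ e ∈ p.1.edges, e ∉ F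

lemma load_union_le (R₁ R₂ : Finset (RoutedPair G)) (e : Sym2 α) :
    load (R₁ ∪ R₂) e ≤ load R₁ e + load R₂ e := by
  simpa only [load, filter_union] using card_union_le _ _

lemma load_singleton (x : RoutedPair G) (e : Sym2 α) :
    load {x} e = if e ∈ x.2.1.edges then 1 else 0 := by
  rw [load, filter_singleton, apply_ite card, card_singleton, card_empty]

namespace IsRouting

variable {A B : Finset α} {L : ℕ} {R R₁ R₂ : Finset (RoutedPair G)}

lemma empty (A B : Finset α) (L : ℕ) : IsRouting A B L (∅ : Finset (RoutedPair G)) := by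
  constructor <;> simp

lemma singleton {a b : α} (ha : a ∈ A) (hb : b ∈ B) (p : G.Path a b) (hp : p.1.length ≤ L) :
    IsRouting A B L {(⟨(a, b), p⟩ : RoutedPair G)} := by
  constructor <;> simp [ha, hb, hp]

lemma sources_subset (h : IsRouting A B L R) : sources R ⊆ A :=
  image_subset_iff.2 h.source_mem

lemma targets_subset (h : IsRouting A B L R) : targets R ⊆ B :=
  image_subset_iff.2 h.target_mem

lemma card_sdiff_sources (h : IsRouting A B L R) : (A \ sources R).card = A.card - R.card := by
  rw [card_sdiff_of_subset h.sources_subset, sources, card_image_of_injOn h.injOn_source]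

lemma card_sdiff_targets (h : IsRouting A B L R) : (B \ targets R).card = B.card - R.card := by
  rw [card_sdiff_of_subset h.targets_subset, targets, card_image_of_injOn h.injOn_target]

lemma source_ne_of_sdiff (h : IsRouting (A \ sources R₁) B L R₂) :
    ∀ x ∈ R₁, ∀ y ∈ R₂, x.1.1 ≠ y.1.1 := fun _ hx y hy hxy =>
  (mem_sdiff.1 (h.source_mem y hy)).2 (hxy ▸ mem_image_of_mem _ hx)

lemma target_ne_of_sdiff (h : IsRouting A (B \ targets R₁) L R₂) :
    ∀ x ∈ R₁, ∀ y ∈ R₂, x.1.2 ≠ y.1.2 := fun _ hx y hy hxy =>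
  (mem_sdiff.1 (h.target_mem y hy)).2 (hxy ▸ mem_image_of_mem _ hx)

lemma disjoint_of_sdiff (h : IsRouting (A \ sources R₁) B L R₂) : Disjoint R₁ R₂ :=
  disjoint_left.2 fun x h₁ h₂ => h.source_ne_of_sdiff x h₁ x h₂ rfl

lemma union_of_sdiff (h₁ : IsRouting A B L R₁)
    (h₂ : IsRouting (A \ sources R₁) (B \ targets R₁) L R₂) : IsRouting A B L (R₁ ∪ R₂) where
  source_mem := forall_mem_union.2 ⟨h₁.source_mem, fun x hx => sdiff_subset (h₂.source_mem x hx)⟩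
  target_mem := forall_mem_union.2 ⟨h₁.target_mem, fun x hx => sdiff_subset (h₂.target_mem x hx)⟩
  injOn_source := by
    rw [coe_union, Set.injOn_union (disjoint_coe.2 h₂.disjoint_of_sdiff)]
    exact ⟨h₁.injOn_source, h₂.injOn_source, h₂.source_ne_of_sdiff⟩
  injOn_target := by
    rw [coe_union, Set.injOn_union (disjoint_coe.2 h₂.disjoint_of_sdiff)]
    exact ⟨h₁.injOn_target, h₂.injOn_target, h₂.target_ne_of_sdiff⟩
  length_le := forall_mem_union.2 ⟨h₁.length_le, h₂.length_le⟩

lemma exists_finset_forall_notMem_load_lt (h : IsRouting A B L R) {c : ℕ} (hc : 0 < c) :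
    ∃ F : Finset (Sym2 α), F.card * c ≤ R.card * L ∧ ∀ e ∉ F, load R e < c := by
  let used : Finset (Sym2 α) := R.biUnion fun x => x.2.1.edges.toFinset
  refine ⟨used.filter fun e => c ≤ load R e, ?_, fun e he => ?_⟩
  · refine card_mul_le_card_mul (fun e (x : RoutedPair G) => e ∈ x.2.1.edges)
      (fun e he => (mem_filter.1 he).2) fun x hx => ?_
    have hsub : bipartiteBelow (fun e (x : RoutedPair G) => e ∈ x.2.1.edges)
        (used.filter fun e => c ≤ load R e) x ⊆ x.2.1.edges.toFinset := fun e he =>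
      List.mem_toFinset.2 (mem_filter.1 he).2
    calc _ ≤ x.2.1.edges.toFinset.card := card_le_card hsub
      _ ≤ x.2.1.edges.length := List.toFinset_card_le _
      _ ≤ L := by simpa only [SimpleGraph.Walk.length_edges] using h.length_le x hx
  · by_contra! hload
    obtain ⟨x, hx⟩ := card_pos.1 (hc.trans_le hload)
    rw [mem_filter] at hx
    exact he (mem_filter.2 ⟨mem_biUnion.2 ⟨x, hx.1, List.mem_toFinset.2 hx.2⟩, hload⟩)

lemma exists_matching (h : IsRouting A B L R) :
    ∃ M : Finset (α × α),
      (∀ p ∈ M, p.1 ∈ A ∧ p.2 ∈ B) ∧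
      (∀ p ∈ M, ∀ q ∈ M, p ≠ q → p.1 ≠ q.1 ∧ p.2 ≠ q.2) ∧
      M.card = R.card ∧
      ∃ P : ∀ p : {x : α × α // x ∈ M}, G.Walk p.1.1 p.1.2,
        (∀ p, (P p).IsPath ∧ (P p).length ≤ L) ∧
        ∀ e : Sym2 α, {p : {x : α × α // x ∈ M} | e ∈ (P p).edges}.ncard ≤ load R e := by
  have hfst : Set.InjOn (Sigma.fst : RoutedPair G → α × α) R := fun x hx y hy hxy =>
    h.injOn_source hx hy (congrArg Prod.fst hxy)
  have hpath : ∀ p : {x : α × α // x ∈ R.image Sigma.fst}, ∃ P : G.Path p.1.1 p.1.2,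
      (⟨p.1, P⟩ : RoutedPair G) ∈ R := by
    rintro ⟨_, hp⟩
    obtain ⟨x, hx, rfl⟩ := mem_image.1 hp
    exact ⟨x.2, hx⟩
  choose P hP using hpath
  refine ⟨R.image Sigma.fst, forall_mem_image.2 fun x hx => ⟨h.source_mem x hx, h.target_mem x hx⟩,
    forall_mem_image.2 fun x hx => forall_mem_image.2 fun y hy hxy => ?_,
    card_image_of_injOn hfst, fun p => (P p).1,
    fun p => ⟨(P p).2, h.length_le _ (hP p)⟩, fun e => ?_⟩
  · exact ⟨fun hs => hxy (congrArg _ (h.injOn_source hx hy hs)),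
      fun ht => hxy (congrArg _ (h.injOn_target hx hy ht))⟩
  · rw [load, ← Set.ncard_coe_finset]
    refine Set.ncard_le_ncard_of_injOn (fun p => (⟨p.1, P p⟩ : RoutedPair G))
      (fun p hp => mem_coe.2 (mem_filter.2 ⟨hP p, hp⟩)) ?_ (finite_toSet _)
    exact fun p _ q _ hpq => Subtype.ext (congrArg Sigma.fst hpq)

end IsRouting

namespace RobustlyLinked

variable {s L : ℕ} {A B : Finset α}

lemma exists_isRouting_card_add_one (hG : RobustlyLinked G s L) (hs : 0 < s) (hL : 0 < L)
    (hAB : A.card ≤ B.card) {R : Finset (RoutedPair G)} (hR : IsRouting A B L R)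
    (hload : ∀ e, load R e ≤ s * L) (hcard : 2 * R.card < A.card) :
    ∃ R' : Finset (RoutedPair G),
      IsRouting A B L R' ∧ R'.card = R.card + 1 ∧ ∀ e, load R' e ≤ s * L := by
  have hA := hR.card_sdiff_sources
  have hB := hR.card_sdiff_targets
  obtain ⟨F, hFL, hF⟩ := hR.exists_finset_forall_notMem_load_lt (Nat.mul_pos hs hL)
  have hFs : F.card * s ≤ R.card := Nat.le_of_mul_le_mul_right (by rwa [mul_assoc]) hL
  obtain ⟨a, ha, b, hb, p, hpL, hpF⟩ := hG F (A \ sources R) (B \ targets R)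
    (card_pos.1 (by omega)) (by omega) (by omega)
  have hp := IsRouting.singleton ha hb p hpL
  refine ⟨_, hR.union_of_sdiff hp, ?_, fun e => (load_union_le _ _ e).trans ?_⟩
  · rw [card_union_of_disjoint hp.disjoint_of_sdiff, card_singleton]
  · rw [load_singleton]
    split_ifs with he
    · exact hF e (hpF e he)
    · exact hload e

lemma exists_isRouting_card_eq (hG : RobustlyLinked G s L) (hs : 0 < s) (hL : 0 < L)
    (hAB : A.card ≤ B.card) {j : ℕ} (hj : 2 * j ≤ A.card + 1) :
    ∃ R : Finset (RoutedPair G), IsRouting A B L R ∧ R.card = j ∧ ∀ e, load R e ≤ s * L := by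
  induction j with
  | zero => exact ⟨∅, .empty A B L, card_empty, by simp [load]⟩
  | succ j ih =>
    obtain ⟨R, hR, rfl, hload⟩ := ih (by omega)
    exact hG.exists_isRouting_card_add_one hs hL hAB hR hload (by omega)

lemma exists_isRouting (hG : RobustlyLinked G s L) (hs : 0 < s) (hL : 0 < L) {r : ℕ}
    (hA : A.card < 2 ^ r) (hAB : A.card ≤ B.card) :
    ∃ R : Finset (RoutedPair G),
      IsRouting A B L R ∧ R.card = A.card ∧ ∀ e, load R e ≤ r * (s * L) := by
  induction r generalizing A B with
  | zero => exact ⟨∅, .empty A B L, by simp_all, by simp [load]⟩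
  | succ r ih =>
    obtain ⟨R₁, hR₁, hcard₁, hload₁⟩ :=
      hG.exists_isRouting_card_eq hs hL hAB (j := (A.card + 1) / 2) (by omega)
    have hA' := hR₁.card_sdiff_sources
    have hB' := hR₁.card_sdiff_targets
    obtain ⟨R₂, hR₂, hcard₂, hload₂⟩ := ih (A := A \ sources R₁) (B := B \ targets R₁)
      (by rw [pow_succ] at hA; omega) (by omega)
    refine ⟨R₁ ∪ R₂, hR₁.union_of_sdiff hR₂, ?_, fun e => ?_⟩
    · rw [card_union_of_disjoint hR₂.disjoint_of_sdiff]
      omega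
    · calc load (R₁ ∪ R₂) e ≤ load R₁ e + load R₂ e := load_union_le _ _ e
        _ ≤ s * L + r * (s * L) := add_le_add (hload₁ e) (hload₂ e)
        _ = (r + 1) * (s * L) := by ring

end RobustlyLinked

end Routing

/-! ### Expanders are robustly linked -/

section Expander

variable {G H : SimpleGraph V} {φ : ℝ} {S T : Finset V}

/-- The vertices that can be reached from `S` by a walk of length at most `k` in `H`. -/
def closedBall (H : SimpleGraph V) (S : Finset V) (k : ℕ) : Finset V :=
  univ.filter fun v => ∃ a ∈ S, ∃ w : H.Walk a v, w.length ≤ k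

lemma mem_closedBall {k : ℕ} {v : V} :
    v ∈ closedBall H S k ↔ ∃ a ∈ S, ∃ w : H.Walk a v, w.length ≤ k := by
  rw [closedBall, mem_filter, and_iff_right (mem_univ v)]

lemma subset_closedBall (H : SimpleGraph V) (S : Finset V) (k : ℕ) : S ⊆ closedBall H S k :=
  fun v hv => mem_closedBall.2 ⟨v, hv, .nil, k.zero_le⟩

lemma closedBall_mono (H : SimpleGraph V) (S : Finset V) : Monotone (closedBall H S) :=
  fun _ _ hkl _ hv =>
    let ⟨a, ha, w, hw⟩ := mem_closedBall.1 hv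
    mem_closedBall.2 ⟨a, ha, w, hw.trans hkl⟩

lemma mem_closedBall_succ_of_adj {k : ℕ} {u v : V} (hu : u ∈ closedBall H S k) (huv : H.Adj u v) :
    v ∈ closedBall H S (k + 1) := by
  obtain ⟨a, ha, w, hw⟩ := mem_closedBall.1 hu
  exact mem_closedBall.2 ⟨a, ha, w.concat huv, by rw [SimpleGraph.Walk.length_concat]; omega⟩

lemma gvol_mono (G : SimpleGraph V) : Monotone (gvol G) :=
  fun _ _ h => sum_le_sum_of_subset h

lemma gvol_sdiff_add_gvol (G : SimpleGraph V) (h : S ⊆ T) :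
    gvol G (T \ S) + gvol G S = gvol G T :=
  sum_sdiff h

lemma card_le_gvol (hdeg : ∀ v, 0 < gdeg G v) (S : Finset V) : S.card ≤ gvol G S :=
  card_eq_sum_ones S ▸ sum_le_sum fun v _ => hdeg v

lemma gvol_le_card_sq (G : SimpleGraph V) (S : Finset V) : gvol G S ≤ Fintype.card V ^ 2 :=
  calc gvol G S ≤ S.card • Fintype.card V := sum_le_card_nsmul _ _ _ fun _ _ => card_le_univ _
    _ ≤ Fintype.card V ^ 2 := by rw [smul_eq_mul, sq]; gcongr; exact card_le_univ S

lemma gdeg_pos_of_connected [Nontrivial V] (hG : G.Connected) (v : V) : 0 < gdeg G v :=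
  let ⟨u, hu⟩ := hG.preconnected.exists_adj_of_nontrivial v
  card_pos.2 ⟨u, mem_filter.2 ⟨mem_univ u, hu⟩⟩

lemma gcut_le_gvol_sdiff (hHG : H ≤ G) (hST : ∀ u ∈ S, ∀ v, H.Adj u v → v ∈ T) :
    gcut H S ≤ gvol G (T \ S) := by
  simp only [gcut, gvol, gdeg, ← card_sigma]
  refine card_le_card_of_injOn (fun p => ⟨p.2, p.1⟩) ?_ ?_
  · rintro ⟨u, v⟩ huv
    obtain ⟨hu, hv, hadj⟩ := (mem_filter.1 huv).2
    exact mem_sigma.2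
      ⟨mem_sdiff.2 ⟨hST u hu v hadj, hv⟩, mem_filter.2 ⟨mem_univ u, (hHG hadj).symm⟩⟩
  · rintro ⟨u, v⟩ - ⟨u', v'⟩ - h
    cases h
    rfl

lemma gcut_le_gcut_deleteEdges_add_card (G : SimpleGraph V) (F : Finset (Sym2 V)) (S : Finset V) :
    gcut G S ≤ gcut (G.deleteEdges F) S + F.card := by
  set X := univ.filter fun p : V × V => p.1 ∈ S ∧ p.2 ∉ S ∧ G.Adj p.1 p.2 with hX
  have hdeleted : (X.filter fun p => s(p.1, p.2) ∈ F).card ≤ F.card := by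
    refine card_le_card_of_injOn (fun p => s(p.1, p.2)) (fun p hp => (mem_filter.1 hp).2) ?_
    rintro ⟨u, v⟩ huv ⟨u', v'⟩ huv' h
    simp only [hX, coe_filter, mem_filter, mem_univ, true_and, Set.mem_ofPred_eq] at huv huv'
    rcases Sym2.eq_iff.1 h with ⟨rfl, rfl⟩ | ⟨rfl, rfl⟩
    · rfl
    · exact absurd huv'.1.1 huv.1.2.1
  have hkept : (X.filter fun p => s(p.1, p.2) ∉ F).card ≤ gcut (G.deleteEdges F) S := by
    refine card_le_card fun p hp => ?_
    simp only [hX, mem_filter, mem_univ, true_and] at hp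
    simpa only [mem_filter, mem_univ, true_and, SimpleGraph.deleteEdges_adj, mem_coe, and_assoc]
      using hp
  calc gcut G S = _ := (card_filter_add_card_filter_not (s := X) fun p => s(p.1, p.2) ∉ F).symm
    _ ≤ _ := by gcongr; simpa only [not_not] using hdeleted

lemma exists_path_of_not_disjoint_closedBall {F : Finset (Sym2 V)} {k l : ℕ}
    (h : ¬ Disjoint (closedBall (G.deleteEdges F) S k) (closedBall (G.deleteEdges F) T l)) :
    ∃ a ∈ S, ∃ b ∈ T, ∃ p : G.Path a b, p.1.length ≤ k + l ∧ ∀ e ∈ p.1.edges, e ∉ F := by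
  obtain ⟨v, hvS, hvT⟩ := not_disjoint_iff.1 h
  obtain ⟨a, ha, w₁, hw₁⟩ := mem_closedBall.1 hvS
  obtain ⟨b, hb, w₂, hw₂⟩ := mem_closedBall.1 hvT
  have hle : G.deleteEdges F ≤ G := SimpleGraph.deleteEdges_le _
  let p : (G.deleteEdges F).Path a b := (w₁.append w₂.reverse).toPath
  refine ⟨a, ha, b, hb, ⟨p.1.mapLe hle, (SimpleGraph.Walk.isPath_mapLe hle).2 p.2⟩, ?_, ?_⟩
  · calc (p.1.mapLe hle).length = p.1.length := SimpleGraph.Walk.length_map _ _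
      _ ≤ (w₁.append w₂.reverse).length := SimpleGraph.Walk.length_bypass_le_length _
      _ ≤ k + l := by
        rw [SimpleGraph.Walk.length_append, SimpleGraph.Walk.length_reverse]
        omega
  · intro e he
    rw [SimpleGraph.Walk.edges_mapLe_eq_edges] at he
    have hmem := p.1.edges_subset_edgeSet he
    rw [SimpleGraph.edgeSet_deleteEdges] at hmem
    exact fun heF => hmem.2 (mem_coe.2 heF)

namespace IsExpander

lemma mul_gvol_le_gcut (hG : IsExpander G φ) (hS : 2 * gvol G S ≤ gvol G univ) :
    φ * gvol G S ≤ gcut G S := by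
  have hcompl := gvol_sdiff_add_gvol G (subset_univ S)
  rcases (gvol G S).eq_zero_or_pos with h0 | hpos
  · simp [h0]
  have hne : ∀ {U : Finset V}, 0 < gvol G U → U.Nonempty := fun h =>
    nonempty_of_sum_ne_zero h.ne'
  have hle : (gvol G S : ℝ) ≤ gvol G (univ \ S) := by exact_mod_cast (by omega)
  simpa only [min_eq_left hle] using hG S (hne hpos) (hne (by omega))

lemma one_add_half_mul_gvol_le (hG : IsExpander G φ) {F : Finset (Sym2 V)}
    (hS : 2 * gvol G S ≤ gvol G univ) (hF : 2 * (F.card : ℝ) ≤ φ * gvol G S) (hST : S ⊆ T)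
    (hT : ∀ u ∈ S, ∀ v, (G.deleteEdges F).Adj u v → v ∈ T) :
    (1 + φ / 2) * gvol G S ≤ gvol G T := by
  have hexp := hG.mul_gvol_le_gcut hS
  have hdel : (gcut G S : ℝ) ≤ gcut (G.deleteEdges F) S + F.card := by
    exact_mod_cast gcut_le_gcut_deleteEdges_add_card G F S
  have hcut : (gcut (G.deleteEdges F) S : ℝ) ≤ gvol G (T \ S) := by
    exact_mod_cast gcut_le_gvol_sdiff (SimpleGraph.deleteEdges_le _) hT
  have hvol : (gvol G (T \ S) : ℝ) + gvol G S = gvol G T := by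
    exact_mod_cast gvol_sdiff_add_gvol G hST
  linarith

lemma pow_mul_gvol_le_gvol_closedBall (hG : IsExpander G φ) (hφ : 0 ≤ φ) {F : Finset (Sym2 V)}
    (hF : 2 * (F.card : ℝ) ≤ φ * gvol G S) {k : ℕ}
    (hk : 2 * gvol G (closedBall (G.deleteEdges F) S k) ≤ gvol G univ) :
    (1 + φ / 2) ^ k * gvol G S ≤ gvol G (closedBall (G.deleteEdges F) S k) := by
  induction k with
  | zero => simpa using gvol_mono G (subset_closedBall _ S 0)
  | succ k ih =>
    have hsub := closedBall_mono (G.deleteEdges F) S k.le_succ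
    have hsmall : 2 * gvol G (closedBall (G.deleteEdges F) S k) ≤ gvol G univ :=
      (Nat.mul_le_mul_left 2 (gvol_mono G hsub)).trans hk
    have hF' : 2 * (F.card : ℝ) ≤ φ * gvol G (closedBall (G.deleteEdges F) S k) :=
      hF.trans (by gcongr; exact gvol_mono G (subset_closedBall _ S k))
    calc (1 + φ / 2) ^ (k + 1) * gvol G S = (1 + φ / 2) * ((1 + φ / 2) ^ k * gvol G S) := by ring
      _ ≤ (1 + φ / 2) * gvol G (closedBall (G.deleteEdges F) S k) := by gcongr; exact ih hsmall
      _ ≤ gvol G (closedBall (G.deleteEdges F) S (k + 1)) :=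
        hG.one_add_half_mul_gvol_le hsmall hF' hsub fun _ hu _ => mem_closedBall_succ_of_adj hu

lemma gvol_univ_lt_two_mul_gvol_closedBall (hG : IsExpander G φ) (hφ : 0 ≤ φ)
    {F : Finset (Sym2 V)} (hS : 0 < gvol G S) (hF : 2 * (F.card : ℝ) ≤ φ * gvol G S) {k : ℕ}
    (hk : (gvol G univ : ℝ) ≤ (1 + φ / 2) ^ k) :
    gvol G univ < 2 * gvol G (closedBall (G.deleteEdges F) S k) := by
  by_contra! hsmall
  have hgrow : gvol G univ ≤ gvol G (closedBall (G.deleteEdges F) S k) := by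
    have hS' : (1 : ℝ) ≤ gvol G S := by exact_mod_cast hS
    exact_mod_cast calc (gvol G univ : ℝ) ≤ (1 + φ / 2) ^ k := hk
      _ ≤ (1 + φ / 2) ^ k * gvol G S := le_mul_of_one_le_right (by positivity) hS'
      _ ≤ _ := hG.pow_mul_gvol_le_gvol_closedBall hφ hF hsmall
  have hpos : 0 < gvol G univ := hS.trans_le (gvol_mono G (subset_univ S))
  omega

lemma robustlyLinked (hG : IsExpander G φ) (hφ : 0 ≤ φ) (hdeg : ∀ v, 0 < gdeg G v) {s k : ℕ}
    (hs : 2 ≤ s * φ) (hk : (gvol G univ : ℝ) ≤ (1 + φ / 2) ^ k) :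
    RobustlyLinked G s (k + k) := by
  intro F S T hS hFS hST
  have hhalf : ∀ U : Finset V, 0 < U.card → F.card * s ≤ U.card →
      gvol G univ < 2 * gvol G (closedBall (G.deleteEdges F) U k) := by
    intro U hU hFU
    have hvol := card_le_gvol hdeg U
    refine hG.gvol_univ_lt_two_mul_gvol_closedBall hφ (hU.trans_le hvol) ?_ hk
    calc 2 * (F.card : ℝ) ≤ s * φ * F.card := by gcongr
      _ = φ * (F.card * s : ℕ) := by push_cast; ring
      _ ≤ φ * gvol G U := by gcongr; exact hFU.trans hvol
  refine exists_path_of_not_disjoint_closedBall fun hdisj => ?_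
  have hunion := gvol_mono G (subset_univ
    (closedBall (G.deleteEdges F) S k ∪ closedBall (G.deleteEdges F) T k))
  have hadd : gvol G (closedBall (G.deleteEdges F) S k ∪ closedBall (G.deleteEdges F) T k) =
      gvol G (closedBall (G.deleteEdges F) S k) + gvol G (closedBall (G.deleteEdges F) T k) :=
    sum_union hdisj
  have hS' := hhalf S hS.card_pos hFS
  have hT' := hhalf T (hS.card_pos.trans_le hST) (hFS.trans hST)
  omega

end IsExpander

end Expander

/-! ### Choice of the parameters -/

lemma two_pow_le_one_add_pow_mul {x : ℝ} (hx : 0 ≤ x) {s : ℕ} (hs : 1 ≤ s * x) (t : ℕ) :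
    (2 : ℝ) ^ t ≤ (1 + x) ^ (s * t) := by
  have hbernoulli : (2 : ℝ) ≤ (1 + x) ^ s := by
    linarith [one_add_mul_le_pow (a := x) (by linarith) s]
  rw [pow_mul]
  gcongr

lemma natCeil_two_div_le {φ : ℝ} (h0 : 0 < φ) (h1 : φ ≤ 1) : (⌈2 / φ⌉₊ : ℝ) ≤ 3 / φ := by
  have hinv : 1 ≤ 1 / φ := one_le_one_div h0 h1
  calc (⌈2 / φ⌉₊ : ℝ) ≤ 2 / φ + 1 := (Nat.ceil_lt_add_one (by positivity)).le
    _ ≤ 2 / φ + 1 / φ := by gcongr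
    _ = 3 / φ := by ring

lemma natLog_two_add_one_le {n : ℕ} (hn : 2 ≤ n) :
    ((Nat.log 2 n + 1 : ℕ) : ℝ) ≤ 2 * Real.logb 2 n := by
  have hfloor : (Nat.log 2 n : ℝ) ≤ Real.logb 2 n := Real.natLog_le_logb n 2
  have hlog : (1 : ℝ) ≤ Nat.log 2 n := by exact_mod_cast Nat.log_pos one_lt_two hn
  push_cast
  linarith

lemma IsExpander.exists_isRouting [Nonempty V] {G : SimpleGraph V} {φ : ℝ} (hG : IsExpander G φ)
    (hφ : 0 ≤ φ) (hdeg : ∀ v, 0 < gdeg G v) {s t : ℕ} (hs : 2 ≤ s * φ) (ht : Fintype.card V < 2 ^ t)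
    {A B : Finset V} (hAB : A.card ≤ B.card) :
    ∃ R : Finset (RoutedPair G), IsRouting A B (4 * (s * t)) R ∧ R.card = A.card ∧
      ∀ e, load R e ≤ 4 * (s * t) ^ 2 := by
  have hs0 : 0 < s := Nat.pos_of_ne_zero (by rintro rfl; norm_num at hs)
  have ht0 : 0 < t := Nat.pos_of_ne_zero (by rintro rfl; simp at ht)
  have hk : (gvol G univ : ℝ) ≤ (1 + φ / 2) ^ (s * (t * 2)) := by
    calc (gvol G univ : ℝ) ≤ Fintype.card V ^ 2 := by exact_mod_cast gvol_le_card_sq G univ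
      _ ≤ (2 ^ t) ^ 2 := by gcongr; exact_mod_cast ht.le
      _ = 2 ^ (t * 2) := (pow_mul _ _ _).symm
      _ ≤ _ := two_pow_le_one_add_pow_mul (by positivity) (by linarith) _
  obtain ⟨R, hR, hcard, hload⟩ := (hG.robustlyLinked hφ hdeg hs hk).exists_isRouting hs0
    (by positivity) ((card_le_univ A).trans_lt ht) hAB
  have hL : s * (t * 2) + s * (t * 2) = 4 * (s * t) := by ring
  rw [hL] at hR hload
  exact ⟨R, hR, hcard, fun e => (hload e).trans_eq (by ring)⟩

theorem statement13_general {G : SimpleGraph V} {φ : ℝ} (h0 : 0 < φ) (h1 : φ ≤ 1)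
    (hconn : G.Connected) (hn : 2 ≤ Fintype.card V) (hG : IsExpander G φ) {A B : Finset V}
    (hAB : A.card ≤ B.card) :
    ∃ M : Finset (V × V),
      (∀ p ∈ M, p.1 ∈ A ∧ p.2 ∈ B) ∧
      (∀ p ∈ M, ∀ q ∈ M, p ≠ q → p.1 ≠ q.1 ∧ p.2 ≠ q.2) ∧
      M.card = A.card ∧
      ∃ P : ∀ p : {x : V × V // x ∈ M}, G.Walk p.1.1 p.1.2,
        (∀ p, (P p).IsPath ∧
          ((P p).length : ℝ) ≤ 144 * Real.logb 2 (Fintype.card V) / φ) ∧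
        (∀ e : Sym2 V,
          ({p : {x : V × V // x ∈ M} | e ∈ (P p).edges}.ncard : ℝ) ≤
            144 * (Real.logb 2 (Fintype.card V)) ^ 2 / φ ^ 2) := by
  have : Nontrivial V := Fintype.one_lt_card_iff_nontrivial.1 hn
  set n := Fintype.card V
  set s := ⌈2 / φ⌉₊
  set t := Nat.log 2 n + 1
  have hst : (s * t : ℝ) ≤ 6 * (Real.logb 2 n / φ) := by
    calc (s * t : ℝ) ≤ 3 / φ * (2 * Real.logb 2 n) :=
          mul_le_mul (natCeil_two_div_le h0 h1) (natLog_two_add_one_le hn)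
            (by positivity) (by positivity)
      _ = 6 * (Real.logb 2 n / φ) := by ring
  obtain ⟨R, hR, hcard, hload⟩ := hG.exists_isRouting h0.le (gdeg_pos_of_connected hconn)
    ((div_le_iff₀ h0).1 (Nat.le_ceil _)) (Nat.lt_pow_succ_log_self one_lt_two n) hAB
  obtain ⟨M, hmem, hinj, hM, P, hP, hPload⟩ := hR.exists_matching
  refine ⟨M, hmem, hinj, hM.trans hcard, P, fun p => ⟨(hP p).1, ?_⟩, fun e => ?_⟩
  · calc ((P p).length : ℝ) ≤ 4 * (s * t) := by exact_mod_cast (hP p).2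
      _ ≤ 24 * (s * t) := by gcongr; norm_num
      _ ≤ 24 * (6 * (Real.logb 2 n / φ)) := by gcongr
      _ = 144 * Real.logb 2 n / φ := by ring
  · calc _ ≤ (4 * (s * t) ^ 2 : ℝ) := by exact_mod_cast (hPload e).trans (hload e)
      _ ≤ 4 * (6 * (Real.logb 2 n / φ)) ^ 2 := by gcongr
      _ = 144 * Real.logb 2 n ^ 2 / φ ^ 2 := by ring

/-- There is an absolute constant `C` such that in any connected `φ`-expander
(`0 < φ ≤ 1`) on `n ≥ 2` vertices, for any disjoint vertex sets `A`, `B` with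
`|A| ≤ |B|`, there is a matching `M` of all of `A` into `B`, together with an
embedding of `M` by paths of length at most `C·log₂ n / φ` such that every edge
lies on at most `C·(log₂ n)² / φ²` of the paths. -/
theorem statement13 :
    ∃ C : ℝ, 0 < C ∧
      ∀ (V : Type u) [Fintype V] (G : SimpleGraph V) (φ : ℝ),
        0 < φ → φ ≤ 1 → G.Connected → 2 ≤ Fintype.card V → IsExpander G φ →
        ∀ A B : Finset V, Disjoint A B → A.card ≤ B.card →
          ∃ M : Finset (V × V),
            (∀ p ∈ M, p.1 ∈ A ∧ p.2 ∈ B) ∧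
            (∀ p ∈ M, ∀ q ∈ M, p ≠ q → p.1 ≠ q.1 ∧ p.2 ≠ q.2) ∧
            M.card = A.card ∧
            ∃ P : ∀ p : {x : V × V // x ∈ M}, G.Walk p.1.1 p.1.2,
              (∀ p, (P p).IsPath ∧
                ((P p).length : ℝ) ≤ C * Real.logb 2 (Fintype.card V) / φ) ∧
              (∀ e : Sym2 V,
                ({p : {x : V × V // x ∈ M} | e ∈ (P p).edges}.ncard : ℝ) ≤
                  C * (Real.logb 2 (Fintype.card V)) ^ 2 / φ ^ 2) :=
  ⟨144, by norm_num, fun _ _ _ _ h0 h1 hconn hn hG _ _ _ hAB =>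
    statement13_general h0 h1 hconn hn hG hAB⟩
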